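/- arXiv:2009.09554 — 2 statements merged into one kernel-verified Lean document; each statement's English description precedes it below -/
import Mathlib

section
/- Let ψ₁, …, ψₙ be real-valued random variables on a probability space (Ω, 𝔽, ℙ), let δ ∈ [0, 1], let κ ≥ 0, and let f₁, …, fₙ ≥ 0 and β₁, …, βₙ ≥ 0 satisfy ∑_{i=1}^{n} βᵢ = 1. If ℙ(|ψᵢ| ≤ fᵢ) ≥ 1 − βᵢ δ for every i = 1, …, n, and ∑_{i=1}^{n} fᵢ² ≤ κ², then ℙ(∑_{i=1}^{n} ψᵢ² ≤ κ²) ≥ 1 − δ. -/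
open MeasureTheory

theorem one_sub_sum_le_probReal_iInter {Ω ι : Type*} [MeasurableSpace Ω] [Fintype ι]
    {P : Measure Ω} [IsProbabilityMeasure P] {A : ι → Set Ω} {ε : ι → ℝ}
    (hA : ∀ i, NullMeasurableSet (A i) P) (h : ∀ i, 1 - ε i ≤ P.real (A i)) :
    1 - ∑ i, ε i ≤ P.real (⋂ i, A i) := by
  have compl_le (i : ι) : P.real (A i)ᶜ ≤ ε i := by
    rw [probReal_compl_eq_one_sub₀ (hA i)]
    linarith [h i]
  have compl_iInter_le : P.real (⋂ i, A i)ᶜ ≤ ∑ i, ε i :=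
    calc P.real (⋂ i, A i)ᶜ
      _ = P.real (⋃ i, (A i)ᶜ) := by rw [Set.compl_iInter]
      _ ≤ ∑ i, P.real (A i)ᶜ := measureReal_iUnion_fintype_le _
      _ ≤ ∑ i, ε i := Finset.sum_le_sum fun i _ ↦ compl_le i
  rw [probReal_compl_eq_one_sub₀ (.iInter hA)] at compl_iInter_le
  linarith

theorem sum_sq_le_sum_sq_of_abs_le {ι R : Type*} [Ring R] [LinearOrder R] [IsOrderedRing R]
    {s : Finset ι} {x f : ι → R} (h : ∀ i ∈ s, |x i| ≤ f i) :
    ∑ i ∈ s, x i ^ 2 ≤ ∑ i ∈ s, f i ^ 2 :=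
  Finset.sum_le_sum fun i hi ↦ (sq_abs (x i)).ge.trans (pow_le_pow_left₀ (abs_nonneg _) (h i hi) 2)

theorem quadratic_from_two_sided_general {Ω ι : Type*} [MeasurableSpace Ω] [Fintype ι]
    {P : Measure Ω} [IsProbabilityMeasure P] {ψ : ι → Ω → ℝ} (hψ : ∀ i, AEMeasurable (ψ i) P)
    {f ε : ι → ℝ} {c : ℝ} (h : ∀ i, 1 - ε i ≤ P.real {ω | |ψ i ω| ≤ f i})
    (hf : ∑ i, f i ^ 2 ≤ c) :
    1 - ∑ i, ε i ≤ P.real {ω | ∑ i, ψ i ω ^ 2 ≤ c} := by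
  have nullMeasurable (i : ι) : NullMeasurableSet {ω | |ψ i ω| ≤ f i} P :=
    nullMeasurableSet_le (hψ i).abs aemeasurable_const
  have iInter_subset : ⋂ i, {ω | |ψ i ω| ≤ f i} ⊆ {ω | ∑ i, ψ i ω ^ 2 ≤ c} := fun ω hω ↦
    (sum_sq_le_sum_sq_of_abs_le fun i _ ↦ Set.mem_iInter.mp hω i).trans hf
  exact (one_sub_sum_le_probReal_iInter nullMeasurable h).trans (measureReal_mono iInter_subset)

/-- Proposition 1: a quadratic chance constraint `ℙ(∑ᵢ ψᵢ² ≤ κ²) ≥ 1 − δ` is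
conservatively guaranteed by two-sided (absolute value) chance constraints
`ℙ(|ψᵢ| ≤ fᵢ) ≥ 1 − βᵢδ` with `∑ᵢ βᵢ = 1` and `∑ᵢ fᵢ² ≤ κ²`. -/
theorem quadratic_from_two_sided {Ω : Type*} [MeasurableSpace Ω]
    (P : Measure Ω) [IsProbabilityMeasure P] (n : ℕ)
    (ψ : Fin n → Ω → ℝ) (hψ : ∀ i, Measurable (ψ i))
    (δ κ : ℝ) (hδ0 : 0 ≤ δ) (hδ1 : δ ≤ 1) (hκ : 0 ≤ κ)
    (f β : Fin n → ℝ) (hf : ∀ i, 0 ≤ f i) (hβ : ∀ i, 0 ≤ β i)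
    (hβsum : ∑ i, β i = 1)
    (h : ∀ i, 1 - β i * δ ≤ (P {ω | |ψ i ω| ≤ f i}).toReal)
    (hfsum : ∑ i, (f i) ^ 2 ≤ κ ^ 2) :
    1 - δ ≤ (P {ω | ∑ i, (ψ i ω) ^ 2 ≤ κ ^ 2}).toReal := by
  simpa only [measureReal_def, ← Finset.sum_mul, hβsum, one_mul] using
    quadratic_from_two_sided_general (fun i ↦ (hψ i).aemeasurable) h hfsum
end

section
/- Let ξ be a random vector in ℝ² distributed according to the multivariate Gaussian measure with mean ξ̄ ∈ ℝ² and positive definite covariance matrix Σ_ξ ∈ ℝ^{2×2}, let σ_ξ² = λ_max(Σ_ξ) be the largest eigenvalue of Σ_ξ, let r > 0, and let δ ∈ (0, 1). If ‖ξ̄‖₂ + σ_ξ √(2 log(1/δ)) ≤ r, then ℙ(‖ξ‖₂ ≤ r) ≥ 1 − δ. -/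
open MeasureTheory Matrix Real

/-- The multivariate Gaussian measure on `ℝⁿ` with mean `m` and (positive
definite) covariance matrix `S`, defined via its density with respect to
Lebesgue measure. -/
noncomputable def multivariateGaussian {n : ℕ} (m : Fin n → ℝ)
    (S : Matrix (Fin n) (Fin n) ℝ) : Measure (Fin n → ℝ) :=
  volume.withDensity fun x =>
    ENNReal.ofReal ((Real.sqrt ((2 * π) ^ n * S.det))⁻¹ *
      Real.exp (-((x - m) ⬝ᵥ (S⁻¹ *ᵥ (x - m))) / 2))

/-!
The Mahalanobis distance from the mean is invariant under affine maps, and `N(m, A Aᵀ)` is the image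
of the standard Gaussian under `z ↦ A z + m`. In the plane the standard Gaussian tail is exact: the
polar Jacobian makes the radial density `r exp(-r² / 2)` a derivative, so the squared Mahalanobis
distance exceeds `t` with probability `exp(-t / 2)`, which is `δ` for `t = 2 log (1 / δ)`. Outside
this event `S⁻¹ ≥ λ_max⁻¹` gives `‖ξ - m‖² ≤ λ_max t`, and the triangle inequality concludes.
-/

section Spectral

variable {ι 𝕜 : Type*} [Fintype ι] [DecidableEq ι] [RCLike 𝕜] {S : Matrix ι ι 𝕜}

open scoped ComplexOrder MatrixOrder

lemma posSemidef_inv_sub_inv_iSup_eigenvalues (hS : S.PosDef) :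
    (S⁻¹ - (⨆ i, hS.1.eigenvalues i)⁻¹ • 1).PosSemidef := by
  rw [← Matrix.le_iff, ← Algebra.algebraMap_eq_smul_one,
    algebraMap_le_iff_le_spectrum (ha := hS.inv.1)]
  intro x hx
  lift S to (Matrix ι ι 𝕜)ˣ using hS.isUnit
  rw [← coe_units_inv, ← spectrum.inv₀_mem_iff, hS.1.spectrum_real_eq_range_eigenvalues] at hx
  obtain ⟨i, hi⟩ := hx
  rw [← inv_inv x, ← hi]
  exact inv_anti₀ (hS.eigenvalues_pos i) (le_ciSup (Set.finite_range _).bddAbove i)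

open scoped Matrix.Norms.L2Operator in
lemma exists_mul_conjTranspose_eq (hS : S.PosDef) :
    ∃ A : Matrix ι ι 𝕜, A.det ≠ 0 ∧ A * Aᴴ = S := by
  obtain ⟨A, hA, hSA⟩ :=
    CStarAlgebra.isStrictlyPositive_iff_eq_mul_star_self.mp hS.isStrictlyPositive
  exact ⟨A, (isUnit_iff_isUnit_det A).1 hA |>.ne_zero, hSA.symm⟩

end Spectral

section Mahalanobis

open WithLp

variable {ι : Type*} [Fintype ι] [DecidableEq ι]

/-- The squared Mahalanobis distance of `x` from the Gaussian with mean `m` and covariance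
matrix `S`, that is, the quadratic form in the exponent of the density. -/
noncomputable def mahalanobisSq (m : ι → ℝ) (S : Matrix ι ι ℝ) (x : ι → ℝ) : ℝ :=
  (x - m) ⬝ᵥ (S⁻¹ *ᵥ (x - m))

lemma measurable_mahalanobisSq (m : ι → ℝ) (S : Matrix ι ι ℝ) :
    Measurable (mahalanobisSq m S) := by
  unfold mahalanobisSq dotProduct mulVec dotProduct
  fun_prop

lemma mahalanobisSq_affine (m : ι → ℝ) (S : Matrix ι ι ℝ)
    {A : Matrix ι ι ℝ} (hA : A.det ≠ 0) (b x : ι → ℝ) :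
    mahalanobisSq (A *ᵥ m + b) (A * S * Aᵀ) (A *ᵥ x + b) = mahalanobisSq m S x := by
  have hAinv : A⁻¹ *ᵥ (A *ᵥ (x - m)) = x - m := by
    rw [mulVec_mulVec, nonsing_inv_mul A hA.isUnit, one_mulVec]
  unfold mahalanobisSq
  rw [add_sub_add_right_eq_sub, ← mulVec_sub, Matrix.mul_inv_rev, Matrix.mul_inv_rev,
    ← mulVec_mulVec, ← mulVec_mulVec, hAinv, dotProduct_mulVec, ← transpose_nonsing_inv,
    vecMul_transpose, hAinv]

lemma mahalanobisSq_zero_one (x : ι → ℝ) : mahalanobisSq 0 1 x = ‖toLp 2 x‖ ^ 2 := by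
  simp [mahalanobisSq, EuclideanSpace.real_norm_sq_eq, dotProduct, ← sq]

lemma norm_sub_sq_le_iSup_eigenvalues_mul_mahalanobisSq
    {S : Matrix ι ι ℝ} (hS : S.PosDef) (m x : ι → ℝ) :
    ‖toLp 2 (x - m)‖ ^ 2 ≤ (⨆ i, hS.1.eigenvalues i) * mahalanobisSq m S x := by
  rcases isEmpty_or_nonempty ι with _ | ⟨⟨i⟩⟩
  · simp [Subsingleton.elim (x - m) 0]
  have hσ : 0 < ⨆ i, hS.1.eigenvalues i :=
    (hS.eigenvalues_pos i).trans_le (le_ciSup (Set.finite_range _).bddAbove i)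
  have hform := (posSemidef_inv_sub_inv_iSup_eigenvalues hS).dotProduct_mulVec_nonneg (x - m)
  have hnorm : ‖toLp 2 (x - m)‖ ^ 2 = (x - m) ⬝ᵥ (x - m) := by
    simp only [EuclideanSpace.real_norm_sq_eq, dotProduct, ← sq]
  rw [star_trivial, sub_mulVec, smul_mulVec, one_mulVec, dotProduct_sub, dotProduct_smul,
    smul_eq_mul, sub_nonneg, inv_mul_le_iff₀ hσ, ← hnorm] at hform
  exact hform

lemma norm_le_of_mahalanobisSq_le {S : Matrix ι ι ℝ} (hS : S.PosDef)
    {m x : ι → ℝ} {t : ℝ} (hx : mahalanobisSq m S x ≤ t) :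
    ‖toLp 2 x‖ ≤ ‖toLp 2 m‖ + √(⨆ i, hS.1.eigenvalues i) * √t := by
  have hσ : 0 ≤ ⨆ i, hS.1.eigenvalues i := Real.iSup_nonneg fun i => (hS.eigenvalues_pos i).le
  have hdev : ‖toLp 2 (x - m)‖ ≤ √(⨆ i, hS.1.eigenvalues i) * √t := by
    rw [← Real.sqrt_mul hσ]
    refine Real.le_sqrt_of_sq_le ?_
    grw [norm_sub_sq_le_iSup_eigenvalues_mul_mahalanobisSq hS m x, hx]
  calc ‖toLp 2 x‖ = ‖toLp 2 m + toLp 2 (x - m)‖ := by rw [← toLp_add, add_sub_cancel]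
    _ ≤ ‖toLp 2 m‖ + ‖toLp 2 (x - m)‖ := norm_add_le _ _
    _ ≤ _ := by gcongr

end Mahalanobis

section AffineImage

variable {ι : Type*} [Fintype ι] [DecidableEq ι]

lemma map_mulVec_add_volume {A : Matrix ι ι ℝ} (hA : A.det ≠ 0) (b : ι → ℝ) :
    (volume : Measure (ι → ℝ)).map (fun x => A *ᵥ x + b) =
      ENNReal.ofReal |A.det⁻¹| • volume := by
  have hcomp := Measure.map_map (μ := volume) (measurable_add_const b)
    (toLin' A).continuous_of_finiteDimensional.measurable
  rw [Real.map_matrix_volume_pi_eq_smul_volume_pi hA, Measure.map_smul,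
    map_add_right_eq_self] at hcomp
  exact hcomp.symm

variable {n : ℕ}

/-- The density of `multivariateGaussian m S`, kept as a separate function so that its behaviour
under affine maps can be stated pointwise. -/
noncomputable def gaussianDensity (m : Fin n → ℝ) (S : Matrix (Fin n) (Fin n) ℝ)
    (x : Fin n → ℝ) : ENNReal :=
  ENNReal.ofReal ((√((2 * π) ^ n * S.det))⁻¹ * exp (-mahalanobisSq m S x / 2))

lemma multivariateGaussian_eq_withDensity (m : Fin n → ℝ) (S : Matrix (Fin n) (Fin n) ℝ) :
    multivariateGaussian m S = volume.withDensity (gaussianDensity m S) :=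
  rfl

lemma measurable_gaussianDensity (m : Fin n → ℝ) (S : Matrix (Fin n) (Fin n) ℝ) :
    Measurable (gaussianDensity m S) := by
  have hq := measurable_mahalanobisSq m S
  unfold gaussianDensity
  fun_prop

lemma gaussianDensity_affine (m : Fin n → ℝ) (S : Matrix (Fin n) (Fin n) ℝ)
    {A : Matrix (Fin n) (Fin n) ℝ} (hA : A.det ≠ 0) (b x : Fin n → ℝ) :
    gaussianDensity (A *ᵥ m + b) (A * S * Aᵀ) (A *ᵥ x + b) =
      ENNReal.ofReal |A.det⁻¹| * gaussianDensity m S x := by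
  have hdet : √((2 * π) ^ n * (A * S * Aᵀ).det) = |A.det| * √((2 * π) ^ n * S.det) := by
    rw [det_mul, det_mul, det_transpose, ← Real.sqrt_sq_eq_abs, ← Real.sqrt_mul (sq_nonneg _)]
    ring_nf
  unfold gaussianDensity
  rw [hdet, mahalanobisSq_affine m S hA, ← ENNReal.ofReal_mul (abs_nonneg _), mul_inv, abs_inv,
    mul_assoc]

lemma map_multivariateGaussian (m : Fin n → ℝ) (S : Matrix (Fin n) (Fin n) ℝ)
    {A : Matrix (Fin n) (Fin n) ℝ} (hA : A.det ≠ 0) (b : Fin n → ℝ) :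
    (multivariateGaussian m S).map (fun x => A *ᵥ x + b) =
      multivariateGaussian (A *ᵥ m + b) (A * S * Aᵀ) := by
  have hT : Measurable fun x => A *ᵥ x + b := by fun_prop
  have hscale : ENNReal.ofReal |A.det⁻¹| ≠ 0 := by simpa using hA
  ext B hB
  refine (ENNReal.mul_right_inj hscale ENNReal.ofReal_ne_top).1 ?_
  calc ENNReal.ofReal |A.det⁻¹| * (multivariateGaussian m S).map (fun x => A *ᵥ x + b) B
      = ∫⁻ x in (fun x => A *ᵥ x + b) ⁻¹' B,
          gaussianDensity (A *ᵥ m + b) (A * S * Aᵀ) (A *ᵥ x + b) := by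
        simp_rw [gaussianDensity_affine m S hA]
        rw [Measure.map_apply hT hB, multivariateGaussian_eq_withDensity,
          withDensity_apply _ (hT hB), lintegral_const_mul' _ _ ENNReal.ofReal_ne_top]
    _ = ∫⁻ y in B, gaussianDensity (A *ᵥ m + b) (A * S * Aᵀ) y
          ∂(ENNReal.ofReal |A.det⁻¹| • volume) := by
        rw [← map_mulVec_add_volume hA b, setLIntegral_map hB (measurable_gaussianDensity _ _) hT]
    _ = ENNReal.ofReal |A.det⁻¹| * multivariateGaussian (A *ᵥ m + b) (A * S * Aᵀ) B := by
        rw [multivariateGaussian_eq_withDensity, withDensity_apply _ hB, Measure.restrict_smul,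
          lintegral_smul_measure, smul_eq_mul]

end AffineImage

section PlanarTail

open WithLp Filter Topology

lemma integral_Ioi_mul_exp_neg_mul_sq {c : ℝ} (hc : 0 < c) (a : ℝ) :
    ∫ r in Set.Ioi a, r * exp (-c * r ^ 2) = exp (-c * a ^ 2) / (2 * c) := by
  have hderiv : ∀ r ∈ Set.Ici a,
      HasDerivAt (fun r => -exp (-c * r ^ 2) / (2 * c)) (r * exp (-c * r ^ 2)) r := by
    intro r _
    refine (((hasDerivAt_pow 2 r).const_mul (-c)).exp.neg.div_const (2 * c)).congr_deriv ?_
    push_cast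
    field_simp
  have hlim : Tendsto (fun r => -exp (-c * r ^ 2) / (2 * c)) atTop (𝓝 0) := by
    have hexp := tendsto_exp_atBot.comp
      ((tendsto_pow_atTop two_ne_zero).const_mul_atTop_of_neg (neg_lt_zero.2 hc))
    simpa using hexp.neg.div_const (2 * c)
  rw [integral_Ioi_of_hasDerivAt_of_tendsto' hderiv (integrable_mul_exp_neg_mul_sq hc).integrableOn
    hlim]
  ring

lemma setIntegral_lt_norm_exp_neg_mul_norm_sq {c : ℝ} (hc : 0 < c) {a : ℝ} (ha : 0 ≤ a) :
    ∫ z : EuclideanSpace ℝ (Fin 2) in {z | a < ‖z‖}, exp (-c * ‖z‖ ^ 2) =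
      π / c * exp (-c * a ^ 2) := by
  have hball : volume.real (Metric.ball (0 : EuclideanSpace ℝ (Fin 2)) 1) = π := by
    simp [measureReal_def, pi_nonneg]
  calc ∫ z : EuclideanSpace ℝ (Fin 2) in {z | a < ‖z‖}, exp (-c * ‖z‖ ^ 2)
      = ∫ z : EuclideanSpace ℝ (Fin 2), (Set.Ioi a).indicator (fun r => exp (-c * r ^ 2)) ‖z‖ := by
        rw [← integral_indicator (measurableSet_lt measurable_const measurable_norm)]
        rfl
    _ = 2 * (π * ∫ r in Set.Ioi 0, r * (Set.Ioi a).indicator (fun r => exp (-c * r ^ 2)) r) := by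
        rw [integral_fun_norm_addHaar, hball]
        simp
    _ = 2 * (π * ∫ r in Set.Ioi a, r * exp (-c * r ^ 2)) := by
        simp_rw [← Set.indicator_mul_right (Set.Ioi a) (fun r : ℝ => r)]
        rw [setIntegral_indicator measurableSet_Ioi, Set.Ioi_inter_Ioi, sup_eq_right.2 ha]
    _ = π / c * exp (-c * a ^ 2) := by
        rw [integral_Ioi_mul_exp_neg_mul_sq hc]
        field_simp

lemma multivariateGaussian_zero_one_lt_norm {a : ℝ} (ha : 0 ≤ a) :
    multivariateGaussian (0 : Fin 2 → ℝ) 1 {z | a < ‖toLp 2 z‖} =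
      ENNReal.ofReal (exp (-(1 / 2) * a ^ 2)) := by
  have htail := setIntegral_lt_norm_exp_neg_mul_norm_sq one_half_pos ha
  have hint : IntegrableOn (fun z : EuclideanSpace ℝ (Fin 2) => exp (-(1 / 2) * ‖z‖ ^ 2))
      {z | a < ‖z‖} := .of_integral_ne_zero (by rw [htail]; positivity)
  have htoLp := PiLp.volume_preserving_toLp (Fin 2)
  have hmeas : MeasurableSet {z : EuclideanSpace ℝ (Fin 2) | a < ‖z‖} :=
    measurableSet_lt measurable_const measurable_norm
  have hdensity (z : Fin 2 → ℝ) : gaussianDensity 0 1 z =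
      ENNReal.ofReal ((2 * π)⁻¹ * exp (-(1 / 2) * ‖toLp 2 z‖ ^ 2)) := by
    rw [gaussianDensity, mahalanobisSq_zero_one, det_one, mul_one, Real.sqrt_sq two_pi_pos.le]
    ring_nf
  calc multivariateGaussian (0 : Fin 2 → ℝ) 1 (toLp 2 ⁻¹' {z | a < ‖z‖})
      = ∫⁻ z in toLp 2 ⁻¹' {z : EuclideanSpace ℝ (Fin 2) | a < ‖z‖},
          ENNReal.ofReal ((2 * π)⁻¹ * exp (-(1 / 2) * ‖toLp 2 z‖ ^ 2)) := by
        rw [multivariateGaussian_eq_withDensity, withDensity_apply _ (htoLp.measurable hmeas)]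
        simp_rw [hdensity]
    _ = ∫⁻ z : EuclideanSpace ℝ (Fin 2) in {z | a < ‖z‖},
          ENNReal.ofReal ((2 * π)⁻¹ * exp (-(1 / 2) * ‖z‖ ^ 2)) :=
        htoLp.setLIntegral_comp_preimage (f := fun z =>
          ENNReal.ofReal ((2 * π)⁻¹ * exp (-(1 / 2) * ‖z‖ ^ 2))) hmeas (by fun_prop)
    _ = ENNReal.ofReal ((2 * π)⁻¹ * (π / (1 / 2) * exp (-(1 / 2) * a ^ 2))) := by
        rw [← ofReal_integral_eq_lintegral_ofReal (hint.const_mul _)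
          (.of_forall fun z => by positivity), integral_const_mul, htail]
    _ = ENNReal.ofReal (exp (-(1 / 2) * a ^ 2)) := by
        congr 1
        field_simp

lemma multivariateGaussian_lt_mahalanobisSq (m : Fin 2 → ℝ) {S : Matrix (Fin 2) (Fin 2) ℝ}
    (hS : S.PosDef) {t : ℝ} (ht : 0 ≤ t) :
    multivariateGaussian m S {x | t < mahalanobisSq m S x} = ENNReal.ofReal (exp (-t / 2)) := by
  obtain ⟨A, hA, rfl⟩ := exists_mul_conjTranspose_eq hS
  rw [conjTranspose_eq_transpose_of_trivial]
  have hpreimage : (fun z => A *ᵥ z + m) ⁻¹' {x | t < mahalanobisSq m (A * Aᵀ) x} =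
      {z | √t < ‖toLp 2 z‖} := by
    ext z
    have hinv := mahalanobisSq_affine 0 1 hA m z
    rw [mulVec_zero, zero_add, mul_one, mahalanobisSq_zero_one] at hinv
    rw [Set.mem_preimage, Set.mem_ofPred_eq, Set.mem_ofPred_eq, hinv,
      Real.sqrt_lt ht (norm_nonneg _)]
  have hmap := map_multivariateGaussian 0 1 hA m
  rw [mulVec_zero, zero_add, mul_one] at hmap
  rw [← hmap, Measure.map_apply (by fun_prop)
    (measurableSet_lt measurable_const (measurable_mahalanobisSq _ _)), hpreimage,
    multivariateGaussian_zero_one_lt_norm (Real.sqrt_nonneg t), Real.sq_sqrt ht, neg_mul,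
    one_div_mul_eq_div, neg_div]

end PlanarTail

/-- Theorem 2: for `ξ ~ N(ξ̄, Σ_ξ)` in `ℝ²` with `Σ_ξ` positive definite,
`σ_ξ² = λ_max(Σ_ξ)`, `r > 0`, `δ ∈ (0,1)`: if
`‖ξ̄‖₂ + σ_ξ √(2 log(1/δ)) ≤ r` then `ℙ(‖ξ‖₂ ≤ r) ≥ 1 − δ`. -/
theorem gaussian_disk_chance_constraint {Ω : Type*} [MeasurableSpace Ω]
    (P : Measure Ω) [IsProbabilityMeasure P]
    (ξbar : Fin 2 → ℝ) (S : Matrix (Fin 2) (Fin 2) ℝ) (hS : S.PosDef)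
    (ξ : Ω → Fin 2 → ℝ) (hξ : Measurable ξ)
    (hlaw : Measure.map ξ P = multivariateGaussian ξbar S)
    (σsq : ℝ) (hσsq : σsq = ⨆ i, hS.1.eigenvalues i)
    (r : ℝ) (hr : 0 < r) (δ : ℝ) (hδ : δ ∈ Set.Ioo (0 : ℝ) 1)
    (hcond : Real.sqrt (∑ i, (ξbar i) ^ 2) +
      Real.sqrt σsq * Real.sqrt (2 * Real.log (1 / δ)) ≤ r) :
    1 - δ ≤ (P {ω | Real.sqrt (∑ i, (ξ ω i) ^ 2) ≤ r}).toReal := by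
  obtain ⟨hδ0, hδ1⟩ := hδ
  set t := 2 * Real.log (1 / δ) with ht
  have ht0 : 0 ≤ t := mul_nonneg two_pos.le (log_nonneg (one_le_one_div hδ0 hδ1.le))
  have htδ : exp (-t / 2) = δ := by
    rw [ht, one_div, log_inv, mul_neg, neg_neg, mul_div_cancel_left₀ _ two_ne_zero, exp_log hδ0]
  set tail : Set (Fin 2 → ℝ) := {x | t < mahalanobisSq ξbar S x}
  have htail : MeasurableSet tail :=
    measurableSet_lt measurable_const (measurable_mahalanobisSq ξbar S)
  have htail_prob : P.real (ξ ⁻¹' tail) = δ := by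
    rw [← map_measureReal_apply hξ htail, hlaw, measureReal_def,
      multivariateGaussian_lt_mahalanobisSq ξbar hS ht0, htδ, ENNReal.toReal_ofReal hδ0.le]
  have hsub : (ξ ⁻¹' tail)ᶜ ⊆ {ω | √(∑ i, (ξ ω i) ^ 2) ≤ r} := by
    intro ω hω
    have hnorm := norm_le_of_mahalanobisSq_le hS (not_lt.1 hω)
    simp only [EuclideanSpace.norm_eq, norm_eq_abs, sq_abs, ← hσsq] at hnorm
    exact hnorm.trans hcond
  calc 1 - δ = P.real (ξ ⁻¹' tail)ᶜ := by rw [probReal_compl_eq_one_sub (hξ htail), htail_prob]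
    _ ≤ P.real {ω | √(∑ i, (ξ ω i) ^ 2) ≤ r} := measureReal_mono hsub
end
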